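/- For every integer r ≥ 2 there exists a constant c > 0 such that the following holds: for all integers n ≥ 2 and d with 1 ≤ d and d < n/(log n)^{3r²}, every (r+1)-graph H on n vertices with maximum r-degree at most d satisfies α(H) ≥ c·((n/d)·log(n/d))^{1/r}. -/

import Mathlib

open Finset
open scoped Classical

/-- `Z` is an independent set of the hypergraph `H`: it contains no edge. -/
def IsIndep {V : Type*} [DecidableEq V] (H : Finset (Finset V)) (Z : Finset V) : Prop :=
  ∀ e ∈ H, ¬ e ⊆ Z

/-- The independence number of a hypergraph on a finite vertex type. -/
noncomputable def indepNum {V : Type*} [Fintype V] [DecidableEq V]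
    (H : Finset (Finset V)) : ℕ :=
  ((Finset.univ : Finset V).powerset.filter (fun Z => IsIndep H Z)).sup Finset.card

/-- `H` has maximum `r`-degree at most `d`: every `r`-element vertex set is
contained in at most `d` edges. -/
def maxDegLe {V : Type*} [DecidableEq V] (r : ℕ) (H : Finset (Finset V)) (d : ℕ) : Prop :=
  ∀ S : Finset V, S.card = r → (H.filter (fun e => S ⊆ e)).card ≤ d

/-!
Let `M ⊆ V` contain each vertex independently with probability `p`, and let `Z` be a uniformly
random independent subset of `M`. At a vertex `v` where `M` is sparse, condition on `Z` outside the
neighbourhood of `v`: what remains of `Z` is a uniformly random subset of a fixed set `Y`. Either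
`Y` contains at least `K` edges of the link of `v`, and `Z` contains on average `K / 2 ^ r` of them,
or `Y` contains fewer, and `Z` contains none of them with probability at least `2 ^ (-K)`, in which
case `v` can be added to `Z`. So a score counting the link edges inside `Z`, plus `K * 2 ^ K` when
`v` can be added, is at least `K / 2 ^ r` on average. A first moment bound shows that `M` is sparse
at most of its vertices as long as `p * n` is a small enough power of `n / d`. Summed over `v`, the
link edges contribute at most `α ^ r * d`, by the degree condition, and the added vertices at most
`K * 2 ^ K * α`. With `n / d = s ^ (8 * r ^ 2)`, the choice `p * n = s ^ (8 * r + 2)` and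
`K = ⌊log s⌋` yields the bound.
-/

open scoped BigOperators

lemma empty_notMem_of_uniform {V : Type*} {F : Finset (Finset V)} {r : ℕ}
    (hF : ∀ e ∈ F, #e = r) (hr : 1 ≤ r) : ∅ ∉ F := fun h ↦ by
  have := hF ∅ h
  rw [card_empty] at this
  lia

lemma exists_card_le_forall_not_disjoint {V : Type*} {F : Finset (Finset V)} (hF : ∅ ∉ F) :
    ∃ X : Finset V, #X ≤ #F ∧ ∀ S ∈ F, ¬ Disjoint S X := by
  have hne (S : F) : ∃ x, x ∈ S.1 :=
    nonempty_iff_ne_empty.2 fun h ↦ hF (h ▸ S.2)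
  choose x hx using hne
  refine ⟨univ.image x, card_image_le.trans_eq (by simp), fun S hS ↦ ?_⟩
  exact not_disjoint_iff.2 ⟨x ⟨S, hS⟩, hx ⟨S, hS⟩, mem_image_of_mem x (mem_univ _)⟩

section Local

variable {V : Type*} [DecidableEq V] {H F : Finset (Finset V)} {M Z : Finset V} {v : V} {r : ℕ}

/-- The edges of the subhypergraph of `F` induced on the vertex set `T`. -/
def inducedEdges (F : Finset (Finset V)) (T : Finset V) : Finset (Finset V) :=
  {e ∈ F | e ⊆ T}

/-- The independent sets of `H` contained in `M`. -/
noncomputable def indepSubsets (H : Finset (Finset V)) (M : Finset V) : Finset (Finset V) :=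
  {Z ∈ M.powerset | IsIndep H Z}

/-- The neighbourhood of `v` in `M`: the union of the edges inside `M` of the link of `v`, the link
being Mathlib's `Finset.memberSubfamily`. -/
def neighborsIn (H : Finset (Finset V)) (M : Finset V) (v : V) : Finset V :=
  (inducedEdges (H.memberSubfamily v) M).biUnion id

/-- `M` is sparse at `v` if every edge of `H` inside `M` has at most one vertex in the neighbourhood
of `v`. Then, once `Z` is fixed outside that neighbourhood, an independent set `Z ⊆ M` can be
modified freely inside it, on the vertices allowed individually. -/
def IsSparseAt (H : Finset (Finset V)) (M : Finset V) (v : V) : Prop :=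
  ∀ f ∈ H, f ⊆ M → #(f ∩ neighborsIn H M v) ≤ 1

/-- The number of edges of `F` inside `T`, with a bonus `K * 2 ^ K` if there are none. The bonus
makes the average over `T ⊆ Y` large, of order `K`, whatever the number of edges inside `Y`. -/
noncomputable def edgeScore (K : ℕ) (F : Finset (Finset V)) (T : Finset V) : ℕ :=
  #(inducedEdges F T) + if IsIndep F T then K * 2 ^ K else 0

lemma IsIndep.mono {Z' : Finset V} (h : IsIndep H Z) (hZ : Z' ⊆ Z) : IsIndep H Z' :=
  fun e he heZ ↦ h e he (heZ.trans hZ)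

lemma mem_inducedEdges {e T : Finset V} : e ∈ inducedEdges F T ↔ e ∈ F ∧ e ⊆ T := mem_filter

lemma mem_indepSubsets : Z ∈ indepSubsets H M ↔ Z ⊆ M ∧ IsIndep H Z := by
  rw [indepSubsets, mem_filter, mem_powerset]

lemma mem_neighborsIn {u : V} :
    u ∈ neighborsIn H M v ↔ ∃ S ∈ inducedEdges (H.memberSubfamily v) M, u ∈ S :=
  mem_biUnion

lemma neighborsIn_subset : neighborsIn H M v ⊆ M :=
  biUnion_subset.2 fun _ hS ↦ (mem_inducedEdges.1 hS).2

lemma isIndep_iff_inducedEdges_eq_empty : IsIndep F Z ↔ inducedEdges F Z = ∅ :=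
  filter_eq_empty_iff.symm

lemma indepSubsets_nonempty (hH : ∅ ∉ H) (M : Finset V) : (indepSubsets H M).Nonempty :=
  ⟨∅, mem_indepSubsets.2 ⟨empty_subset M, fun _ he h ↦ hH (subset_empty.1 h ▸ he)⟩⟩

lemma card_of_mem_memberSubfamily (hH : ∀ e ∈ H, #e = r + 1) {S : Finset V}
    (hS : S ∈ H.memberSubfamily v) : #S = r := by
  obtain ⟨hvS, hv⟩ := mem_memberSubfamily.1 hS
  simpa [card_insert_of_notMem hv] using hH _ hvS

lemma two_pow_card_le_mul_card_indepSubsets (hF : ∅ ∉ F) (Y : Finset V) :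
    2 ^ #Y ≤ 2 ^ #(inducedEdges F Y) * #(indepSubsets F Y) := by
  obtain ⟨X, hXcard, hX⟩ := exists_card_le_forall_not_disjoint (F := inducedEdges F Y)
    fun h ↦ hF (mem_inducedEdges.1 h).1
  have hsub : (Y \ X).powerset ⊆ indepSubsets F Y := fun T hT ↦ by
    have hTYX := mem_powerset.1 hT
    refine mem_indepSubsets.2 ⟨hTYX.trans sdiff_subset, fun S hS hST ↦ ?_⟩
    have hSYX := hST.trans hTYX
    exact hX S (mem_inducedEdges.2 ⟨hS, hSYX.trans sdiff_subset⟩)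
      (disjoint_of_subset_left hSYX sdiff_disjoint)
  calc 2 ^ #Y ≤ 2 ^ (#(inducedEdges F Y) + #(Y \ X)) := by
        have := le_card_sdiff X Y
        gcongr <;> lia
    _ = 2 ^ #(inducedEdges F Y) * #(Y \ X).powerset := by rw [pow_add, card_powerset]
    _ ≤ 2 ^ #(inducedEdges F Y) * #(indepSubsets F Y) := by gcongr

lemma two_pow_mul_sum_card_inducedEdges (hF : ∀ S ∈ F, #S = r) (Y : Finset V) :
    2 ^ r * ∑ T ∈ Y.powerset, #(inducedEdges F T) = #(inducedEdges F Y) * 2 ^ #Y := by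
  have hinduced : ∀ T ∈ Y.powerset,
      inducedEdges F T = (inducedEdges F Y).bipartiteAbove (fun T S ↦ S ⊆ T) T := fun T hT ↦ by
    ext S
    simp only [mem_inducedEdges, bipartiteAbove, mem_filter]
    exact ⟨fun ⟨hS, hST⟩ ↦ ⟨⟨hS, hST.trans (mem_powerset.1 hT)⟩, hST⟩, fun h ↦ ⟨h.1.1, h.2⟩⟩
  have hsupersets : ∀ S ∈ inducedEdges F Y,
      2 ^ r * #(Y.powerset.bipartiteBelow (fun T S ↦ S ⊆ T) S) = 2 ^ #Y := fun S hS ↦ by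
    obtain ⟨hSF, hSY⟩ := mem_inducedEdges.1 hS
    have hIcc : Y.powerset.bipartiteBelow (fun T S ↦ S ⊆ T) S = Icc S Y := by
      ext T
      simp [bipartiteBelow, and_comm]
    have hcard := card_le_card hSY
    rw [hIcc, card_Icc_finset hSY, ← pow_add, ← hF S hSF, Nat.add_sub_cancel' hcard]
  rw [sum_congr rfl fun T hT ↦ congrArg card (hinduced T hT),
    sum_card_bipartiteAbove_eq_sum_card_bipartiteBelow, mul_sum, sum_congr rfl hsupersets,
    sum_const, smul_eq_mul]

lemma sum_edgeScore (K : ℕ) (F 𝒵 : Finset (Finset V)) :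
    ∑ Z ∈ 𝒵, edgeScore K F Z = ∑ Z ∈ 𝒵, #(inducedEdges F Z) +
      K * 2 ^ K * #{Z ∈ 𝒵 | IsIndep F Z} := by
  simp only [edgeScore]
  rw [sum_add_distrib, ← sum_filter, sum_const, smul_eq_mul, mul_comm #_]

lemma mul_two_pow_card_le_sum_edgeScore (hF : ∀ S ∈ F, #S = r) (hr : 1 ≤ r) (K : ℕ)
    (Y : Finset V) : K * 2 ^ #Y ≤ 2 ^ r * ∑ T ∈ Y.powerset, edgeScore K F T := by
  rw [sum_edgeScore, mul_add, two_pow_mul_sum_card_inducedEdges hF]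
  obtain hmany | hfew := le_total K #(inducedEdges F Y)
  · exact le_add_right (Nat.mul_le_mul_right _ hmany)
  · refine le_add_left ?_
    calc K * 2 ^ #Y ≤ K * (2 ^ #(inducedEdges F Y) * #(indepSubsets F Y)) := by
          gcongr
          exact two_pow_card_le_mul_card_indepSubsets (empty_notMem_of_uniform hF hr) Y
      _ ≤ K * (2 ^ K * #(indepSubsets F Y)) := by gcongr; norm_num
      _ = K * 2 ^ K * #(indepSubsets F Y) := (mul_assoc ..).symm
      _ ≤ 2 ^ r * (K * 2 ^ K * #(indepSubsets F Y)) := Nat.le_mul_of_pos_left _ (by positivity)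

lemma inducedEdges_inter_neighborsIn (hZ : Z ⊆ M) :
    inducedEdges (H.memberSubfamily v) (Z ∩ neighborsIn H M v) =
      inducedEdges (H.memberSubfamily v) Z := by
  ext S
  rw [mem_inducedEdges, mem_inducedEdges, subset_inter_iff]
  refine and_congr_right fun hS ↦ and_iff_left_of_imp fun hSZ u hu ↦ ?_
  exact mem_neighborsIn.2 ⟨S, mem_inducedEdges.2 ⟨hS, hSZ.trans hZ⟩, hu⟩

lemma edgeScore_inter_neighborsIn (K : ℕ) (hZ : Z ⊆ M) :
    edgeScore K (H.memberSubfamily v) (Z ∩ neighborsIn H M v) =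
      edgeScore K (H.memberSubfamily v) Z := by
  simp only [edgeScore, isIndep_iff_inducedEdges_eq_empty, inducedEdges_inter_neighborsIn hZ]

lemma IsSparseAt.isIndep_union (hM : IsSparseAt H M v) {W T : Finset V} (hWM : W ⊆ M)
    (hW : IsIndep H W) (hTN : T ⊆ neighborsIn H M v) (hT : ∀ u ∈ T, IsIndep H (insert u W)) :
    IsIndep H (W ∪ T) := fun f hf hfWT ↦ by
  have hfM : f ⊆ M := hfWT.trans (union_subset hWM (hTN.trans neighborsIn_subset))
  obtain hfT | ⟨u, hu⟩ := (f ∩ T).eq_empty_or_nonempty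
  · exact hW f hf ((disjoint_iff_inter_eq_empty.2 hfT).left_le_of_le_sup_right hfWT)
  · obtain ⟨huf, huT⟩ := mem_inter.1 hu
    refine hT u huT f hf fun y hy ↦ ?_
    obtain hyW | hyT := mem_union.1 (hfWT hy)
    · exact mem_insert_of_mem hyW
    · have hyu : y = u := card_le_one.1 (hM f hf hfM) y (mem_inter.2 ⟨hy, hTN hyT⟩) u
        (mem_inter.2 ⟨huf, hTN huT⟩)
      exact hyu ▸ mem_insert_self y W

lemma IsSparseAt.filter_sdiff_eq (hM : IsSparseAt H M v) {W : Finset V}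
    (hW : W ∈ indepSubsets H M) (hWN : Disjoint W (neighborsIn H M v)) :
    {Z ∈ indepSubsets H M | Z \ neighborsIn H M v = W} =
      ({u ∈ neighborsIn H M v | IsIndep H (insert u W)}).powerset.image (W ∪ ·) := by
  obtain ⟨hWM, hWindep⟩ := mem_indepSubsets.1 hW
  ext Z
  simp only [mem_filter, mem_image, mem_powerset, mem_indepSubsets]
  constructor
  · rintro ⟨⟨-, hZ⟩, rfl⟩
    refine ⟨Z ∩ neighborsIn H M v, fun u hu ↦ ?_, sdiff_union_inter _ _⟩
    obtain ⟨huZ, huN⟩ := mem_inter.1 hu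
    exact mem_filter.2 ⟨huN, hZ.mono (insert_subset huZ sdiff_subset)⟩
  · rintro ⟨T, hT, rfl⟩
    have hTN : T ⊆ neighborsIn H M v := hT.trans (filter_subset _ _)
    refine ⟨⟨union_subset hWM (hTN.trans neighborsIn_subset), ?_⟩, ?_⟩
    · exact hM.isIndep_union hWM hWindep hTN fun u hu ↦ (mem_filter.1 (hT hu)).2
    · rw [union_sdiff_distrib, sdiff_eq_empty_iff_subset.2 hTN, union_empty,
        sdiff_eq_self_of_disjoint hWN]

lemma injOn_union_left_of_disjoint {W N : Finset V} (hWN : Disjoint W N) :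
    Set.InjOn (W ∪ ·) (N.powerset : Set (Finset V)) := fun S hS T hT h ↦ by
  have hdisj (R) (hR : R ∈ (N.powerset : Set (Finset V))) : Disjoint W R :=
    disjoint_of_subset_right (mem_powerset.1 hR) hWN
  rw [← union_sdiff_cancel_left (hdisj S hS), ← union_sdiff_cancel_left (hdisj T hT)]
  exact congrArg (· \ W) h

lemma IsSparseAt.mul_card_indepSubsets_le (hM : IsSparseAt H M v) (hH : ∀ e ∈ H, #e = r + 1)
    (hr : 1 ≤ r) (K : ℕ) :
    K * #(indepSubsets H M) ≤
      2 ^ r * ∑ Z ∈ indepSubsets H M, edgeScore K (H.memberSubfamily v) Z := by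
  set N := neighborsIn H M v with hN
  have hmaps : ∀ Z ∈ indepSubsets H M, Z \ N ∈ (indepSubsets H M).image (· \ N) :=
    fun _ ↦ mem_image_of_mem _
  rw [card_eq_sum_card_fiberwise hmaps, ← sum_fiberwise_of_maps_to hmaps, mul_sum, mul_sum]
  refine sum_le_sum fun W hW ↦ ?_
  obtain ⟨Z, hZ, rfl⟩ := mem_image.1 hW
  obtain ⟨hZM, hZindep⟩ := mem_indepSubsets.1 hZ
  set W := Z \ N
  set Y := {u ∈ N | IsIndep H (insert u W)}
  have hWM : W ⊆ M := sdiff_subset.trans hZM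
  have hWN : Disjoint W N := sdiff_disjoint
  have hWindep : W ∈ indepSubsets H M := mem_indepSubsets.2 ⟨hWM, hZindep.mono sdiff_subset⟩
  have hinj : Set.InjOn (W ∪ ·) (Y.powerset : Set (Finset V)) :=
    injOn_union_left_of_disjoint (disjoint_of_subset_right (filter_subset _ _) hWN)
  have hscore : ∀ T ∈ Y.powerset, edgeScore K (H.memberSubfamily v) (W ∪ T) =
      edgeScore K (H.memberSubfamily v) T := fun T hT ↦ by
    have hTN : T ⊆ N := (mem_powerset.1 hT).trans (filter_subset _ _)
    rw [← edgeScore_inter_neighborsIn K (union_subset hWM (hTN.trans neighborsIn_subset)), ← hN,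
      union_inter_distrib_right, disjoint_iff_inter_eq_empty.1 hWN, empty_union,
      inter_eq_left.2 hTN]
  rw [hM.filter_sdiff_eq hWindep hWN, sum_image hinj, card_image_of_injOn hinj, card_powerset,
    sum_congr rfl hscore]
  exact mul_two_pow_card_le_sum_edgeScore (fun S ↦ card_of_mem_memberSubfamily hH) hr K Y

lemma nonMemberSubfamily_indepSubsets :
    (indepSubsets H M).nonMemberSubfamily v = indepSubsets H (M.erase v) := by
  ext Z
  rw [mem_nonMemberSubfamily, mem_indepSubsets, mem_indepSubsets, subset_erase]
  tauto

lemma isIndep_insert_iff :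
    IsIndep H (insert v Z) ↔ IsIndep H Z ∧ IsIndep (H.memberSubfamily v) Z := by
  constructor
  · refine fun h ↦ ⟨h.mono (subset_insert v Z), fun S hS hSZ ↦ ?_⟩
    exact h _ (mem_memberSubfamily.1 hS).1 (insert_subset_insert v hSZ)
  · rintro ⟨hZ, hlink⟩ e he heZ
    by_cases hve : v ∈ e
    · refine hlink (e.erase v) (mem_memberSubfamily.2 ⟨?_, notMem_erase v e⟩)
        (subset_insert_iff.1 heZ)
      rwa [insert_erase hve]
    · exact hZ e he ((subset_insert_iff_of_notMem hve).1 heZ)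

lemma memberSubfamily_indepSubsets (hv : v ∈ M) :
    (indepSubsets H M).memberSubfamily v =
      {Z ∈ indepSubsets H (M.erase v) | IsIndep (H.memberSubfamily v) Z} := by
  ext Z
  rw [mem_memberSubfamily, mem_filter, mem_indepSubsets, mem_indepSubsets, subset_erase,
    insert_subset_iff]
  by_cases hvZ : v ∈ Z
  · simp [hvZ]
  · rw [isIndep_insert_iff]
    tauto

lemma card_memberSubfamily (v : V) (F : Finset (Finset V)) :
    #(F.memberSubfamily v) = #{e ∈ F | v ∈ e} :=
  card_image_of_injOn ((erase_injOn' v).mono fun _ he ↦ (mem_filter.1 he).2)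

lemma card_indepSubsets_le_two_mul (hv : v ∈ M) :
    #(indepSubsets H M) ≤ 2 * #(indepSubsets H (M.erase v)) := by
  rw [← card_memberSubfamily_add_card_nonMemberSubfamily v, nonMemberSubfamily_indepSubsets,
    memberSubfamily_indepSubsets hv, two_mul]
  exact Nat.add_le_add_right (card_filter_le _ _) _

lemma card_indepSubsets_mono {M' : Finset V} (h : M ⊆ M') :
    #(indepSubsets H M) ≤ #(indepSubsets H M') :=
  card_le_card (filter_subset_filter _ (powerset_mono.2 h))

lemma IsSparseAt.div_le_expect_add_expect (hv : v ∈ M) (hM : IsSparseAt H (M.erase v) v)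
    (hH : ∀ e ∈ H, #e = r + 1) (hr : 1 ≤ r) (K : ℕ) :
    (K / 2 ^ (r + 1) : ℝ) ≤
      𝔼 Z ∈ indepSubsets H (M.erase v), (#(inducedEdges (H.memberSubfamily v) Z) : ℝ) +
        K * 2 ^ K * 𝔼 Z ∈ indepSubsets H M, if v ∈ Z then 1 else 0 := by
  have hpos : (0 : ℝ) < #(indepSubsets H (M.erase v)) := mod_cast
    (indepSubsets_nonempty (empty_notMem_of_uniform hH le_add_self) _).card_pos
  have hmono : (#(indepSubsets H (M.erase v)) : ℝ) ≤ #(indepSubsets H M) :=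
    mod_cast card_indepSubsets_mono (erase_subset v M)
  have hdouble : (#(indepSubsets H M) : ℝ) ≤ 2 * #(indepSubsets H (M.erase v)) :=
    mod_cast card_indepSubsets_le_two_mul hv
  have hlocal := hM.mul_card_indepSubsets_le hH hr K
  rw [sum_edgeScore, ← memberSubfamily_indepSubsets hv, card_memberSubfamily,
    ← Nat.cast_le (α := ℝ)] at hlocal
  push_cast at hlocal
  rw [expect_eq_sum_div_card, expect_eq_sum_div_card, sum_boole]
  set I := (#(indepSubsets H M) : ℝ)
  set I' := (#(indepSubsets H (M.erase v)) : ℝ)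
  set A := ∑ Z ∈ indepSubsets H (M.erase v), (#(inducedEdges (H.memberSubfamily v) Z) : ℝ)
  set B := (#{Z ∈ indepSubsets H M | v ∈ Z} : ℝ)
  have hI : 0 < I := hpos.trans_le hmono
  have hA : 0 ≤ A := sum_nonneg fun _ _ ↦ Nat.cast_nonneg _
  calc (K / 2 ^ (r + 1) : ℝ) = K * (I / 2) / 2 ^ r / I := by
        rw [pow_succ]
        field_simp
    _ ≤ K * I' / 2 ^ r / I := by
        gcongr
        linarith
    _ ≤ (A + K * 2 ^ K * B) / I := by
        gcongr
        rwa [div_le_iff₀' (by positivity)]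
    _ = A / I + K * 2 ^ K * (B / I) := by ring
    _ ≤ A / I' + K * 2 ^ K * (B / I) :=
        add_le_add_left (div_le_div_of_nonneg_left hA hpos hmono) _

end Local

section DegreeSum

variable {V : Type*} [Fintype V] [DecidableEq V] {H : Finset (Finset V)} {r d : ℕ}

lemma sum_card_inducedEdges_memberSubfamily_le (hH : ∀ e ∈ H, #e = r + 1) (hd : maxDegLe r H d)
    (Z : Finset V) : ∑ v, #(inducedEdges (H.memberSubfamily v) Z) ≤ #Z ^ r * d := by
  have hlink (v : V) : inducedEdges (H.memberSubfamily v) Z =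
      (Z.powersetCard r).bipartiteAbove (fun v S ↦ S ∈ H.memberSubfamily v) v := by
    ext S
    rw [mem_inducedEdges, mem_bipartiteAbove, mem_powersetCard]
    have := card_of_mem_memberSubfamily hH (v := v) (S := S)
    tauto
  have hdeg : ∀ S ∈ Z.powersetCard r,
      #(univ.bipartiteBelow (fun v S ↦ S ∈ H.memberSubfamily v) S) ≤ d := fun S hS ↦ by
    have hmem (v : V) (hv : v ∈ univ.bipartiteBelow (fun v S ↦ S ∈ H.memberSubfamily v) S) :
        insert v S ∈ H ∧ v ∉ S := mem_memberSubfamily.1 ((mem_bipartiteBelow _).1 hv).2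
    refine (card_le_card_of_injOn (insert · S) (fun v hv ↦ ?_) fun v hv w _ h ↦ ?_).trans
      (hd S (mem_powersetCard.1 hS).2)
    · exact mem_filter.2 ⟨(hmem v hv).1, subset_insert v S⟩
    · exact (insert_inj (hmem v hv).2).1 h
  calc ∑ v, #(inducedEdges (H.memberSubfamily v) Z)
      = ∑ S ∈ Z.powersetCard r,
          #(univ.bipartiteBelow (fun v S ↦ S ∈ H.memberSubfamily v) S) := by
        simp only [hlink, sum_card_bipartiteAbove_eq_sum_card_bipartiteBelow]
    _ ≤ #(Z.powersetCard r) * d := sum_le_card_nsmul _ _ _ hdeg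
    _ ≤ #Z ^ r * d := by
        rw [card_powersetCard]
        gcongr
        exact Nat.choose_le_pow _ _

end DegreeSum

section RandomSubset

variable {V : Type*} [Fintype V] [DecidableEq V] {p : ℝ}

/-- The probability that a random subset of `V`, containing each element independently with
probability `p`, is equal to `M`. -/
def bernoulliWeight (p : ℝ) (M : Finset V) : ℝ :=
  p ^ #M * (1 - p) ^ #Mᶜ

lemma bernoulliWeight_nonneg (hp : 0 ≤ p) (hp1 : p ≤ 1) (M : Finset V) :
    0 ≤ bernoulliWeight p M :=
  mul_nonneg (pow_nonneg hp _) (pow_nonneg (sub_nonneg.2 hp1) _)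

lemma sum_bernoulliWeight_superset (p : ℝ) (Q : Finset V) :
    ∑ M with Q ⊆ M, bernoulliWeight p M = p ^ #Q := by
  -- Expand the product over `V` of the factors `p + 0` on `Q` and `p + (1 - p)` outside `Q`.
  have hexpand := Fintype.prod_add (fun _ : V ↦ p) fun a ↦ if a ∉ Q then 1 - p else 0
  have hfactor (a : V) : (p + if a ∉ Q then 1 - p else 0) = if a ∈ Q then p else 1 := by
    split_ifs <;> simp_all
  have hsubset (M : Finset V) : (∀ a ∈ Mᶜ, a ∉ Q) ↔ Q ⊆ M := by
    simp only [mem_compl, not_imp_not, subset_iff]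
  simp only [hfactor, prod_ite_mem, univ_inter, prod_ite_zero, hsubset, prod_const, mul_ite,
    mul_zero] at hexpand
  rw [hexpand, sum_filter]
  rfl

lemma sum_bernoulliWeight (p : ℝ) : ∑ M : Finset V, bernoulliWeight p M = 1 := by
  simpa using sum_bernoulliWeight_superset (V := V) p ∅

lemma sum_bernoulliWeight_mem (p : ℝ) (v : V) : ∑ M with v ∈ M, bernoulliWeight p M = p := by
  simpa using sum_bernoulliWeight_superset p {v}

lemma sum_bernoulliWeight_mul_le {f : Finset V → ℝ} {a : ℝ} (hp : 0 ≤ p) (hp1 : p ≤ 1)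
    (hf : ∀ M, f M ≤ a) : ∑ M, bernoulliWeight p M * f M ≤ a :=
  calc ∑ M, bernoulliWeight p M * f M
      ≤ ∑ M : Finset V, bernoulliWeight p M * a :=
        sum_le_sum fun M _ ↦ mul_le_mul_of_nonneg_left (hf M) (bernoulliWeight_nonneg hp hp1 M)
    _ = a := by rw [← sum_mul, sum_bernoulliWeight, one_mul]

lemma bernoulliWeight_le_mul_erase (hp : 0 ≤ p) (hp2 : p ≤ 1 / 2) {M : Finset V} {v : V}
    (hv : v ∈ M) : bernoulliWeight p M ≤ 2 * p * bernoulliWeight p (M.erase v) := by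
  have hcompl : #(M.erase v)ᶜ = #Mᶜ + 1 := by
    rw [compl_erase, card_insert_of_notMem (notMem_compl.2 hv)]
  have hhalf : 1 ≤ 2 * (1 - p) := by linarith
  calc bernoulliWeight p M = p ^ (#(M.erase v) + 1) * (1 - p) ^ #Mᶜ * 1 := by
        rw [bernoulliWeight, card_erase_add_one hv, mul_one]
    _ ≤ p ^ (#(M.erase v) + 1) * (1 - p) ^ #Mᶜ * (2 * (1 - p)) :=
        mul_le_mul_of_nonneg_left hhalf
          (mul_nonneg (pow_nonneg hp _) (pow_nonneg (by linarith) _))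
    _ = 2 * p * bernoulliWeight p (M.erase v) := by
        rw [bernoulliWeight, hcompl]
        ring

lemma sum_bernoulliWeight_mul_erase_le (hp : 0 ≤ p) (hp2 : p ≤ 1 / 2) {f : Finset V → ℝ}
    (hf : ∀ M, 0 ≤ f M) (v : V) :
    ∑ M with v ∈ M, bernoulliWeight p M * f (M.erase v) ≤
      2 * p * ∑ M, bernoulliWeight p M * f M :=
  calc ∑ M with v ∈ M, bernoulliWeight p M * f (M.erase v)
      ≤ ∑ M with v ∈ M, 2 * p * (bernoulliWeight p (M.erase v) * f (M.erase v)) :=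
        sum_le_sum fun M hM ↦ by
          rw [← mul_assoc]
          exact mul_le_mul_of_nonneg_right
            (bernoulliWeight_le_mul_erase hp hp2 (mem_filter.1 hM).2) (hf _)
    _ = 2 * p * ∑ N ∈ ({M | v ∈ M} : Finset (Finset V)).image (·.erase v),
          bernoulliWeight p N * f N := by
        have hinj : Set.InjOn (fun M : Finset V ↦ M.erase v) {M | v ∈ M} :=
          erase_injOn' v
        rw [← mul_sum, sum_image (by simpa using hinj)]
    _ ≤ 2 * p * ∑ M, bernoulliWeight p M * f M := by
        gcongr ?_ * ?_
        refine sum_le_univ_sum_of_nonneg fun M ↦ ?_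
        exact mul_nonneg (bernoulliWeight_nonneg hp (by linarith) M) (hf M)

lemma sum_bernoulliWeight_filter_le {ι : Type*} {I : Finset ι} {Q : ι → Finset V}
    {P : Finset V → Prop} [DecidablePred P] (hp : 0 ≤ p) (hp1 : p ≤ 1)
    (hP : ∀ M, P M → ∃ i ∈ I, Q i ⊆ M) :
    ∑ M with P M, bernoulliWeight p M ≤ ∑ i ∈ I, p ^ #(Q i) := by
  have hnonneg (M : Finset V) : 0 ≤ bernoulliWeight p M := bernoulliWeight_nonneg hp hp1 M
  calc ∑ M with P M, bernoulliWeight p M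
      ≤ ∑ M, ∑ i ∈ I with Q i ⊆ M, bernoulliWeight p M := by
        rw [sum_filter]
        refine sum_le_sum fun M _ ↦ ?_
        split_ifs with hM
        · obtain ⟨i, hi, hiM⟩ := hP M hM
          exact single_le_sum (f := fun _ ↦ bernoulliWeight p M) (fun _ _ ↦ hnonneg M)
            (mem_filter.2 ⟨hi, hiM⟩)
        · exact sum_nonneg fun _ _ ↦ hnonneg M
    _ = ∑ i ∈ I, ∑ M with Q i ⊆ M, bernoulliWeight p M :=
        sum_comm' fun M i ↦ by simp [and_comm]
    _ = ∑ i ∈ I, p ^ #(Q i) := sum_congr rfl fun i _ ↦ sum_bernoulliWeight_superset p (Q i)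

end RandomSubset

section Averaging

variable {V : Type*} [Fintype V] [DecidableEq V] {H : Finset (Finset V)} {r d t : ℕ} {p : ℝ}

lemma sum_expect_card_inducedEdges_le (hH : ∀ e ∈ H, #e = r + 1) (hd : maxDegLe r H d)
    (ht : ∀ Z, IsIndep H Z → #Z ≤ t) (M : Finset V) :
    ∑ v, 𝔼 Z ∈ indepSubsets H M, (#(inducedEdges (H.memberSubfamily v) Z) : ℝ) ≤ t ^ r * d := by
  rw [← expect_sum_comm]
  refine expect_le (indepSubsets_nonempty (empty_notMem_of_uniform hH le_add_self) M)
    fun Z hZ ↦ ?_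
  have hZt : #Z ≤ t := ht Z (mem_indepSubsets.1 hZ).2
  exact_mod_cast (sum_card_inducedEdges_memberSubfamily_le hH hd Z).trans (by gcongr)

lemma sum_expect_mem_le (hH : ∅ ∉ H) (ht : ∀ Z, IsIndep H Z → #Z ≤ t) (M : Finset V) :
    ∑ v, 𝔼 Z ∈ indepSubsets H M, (if v ∈ Z then 1 else 0 : ℝ) ≤ t := by
  rw [← expect_sum_comm]
  refine expect_le (indepSubsets_nonempty hH M) fun Z hZ ↦ ?_
  rw [sum_boole, filter_univ_mem]
  exact_mod_cast ht Z (mem_indepSubsets.1 hZ).2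

lemma div_mul_sum_bernoulliWeight_isSparseAt_le (hH : ∀ e ∈ H, #e = r + 1) (hr : 1 ≤ r)
    (hp : 0 ≤ p) (hp2 : p ≤ 1 / 2) (K : ℕ) (v : V) :
    K / 2 ^ (r + 1) * ∑ M with v ∈ M ∧ IsSparseAt H (M.erase v) v, bernoulliWeight p M ≤
      2 * p * ∑ M, bernoulliWeight p M *
        𝔼 Z ∈ indepSubsets H M, (#(inducedEdges (H.memberSubfamily v) Z) : ℝ) +
      K * 2 ^ K * ∑ M, bernoulliWeight p M *
        𝔼 Z ∈ indepSubsets H M, (if v ∈ Z then 1 else 0 : ℝ) := by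
  have hw (M : Finset V) : 0 ≤ bernoulliWeight p M :=
    bernoulliWeight_nonneg hp (by linarith) M
  set A : Finset V → ℝ :=
    fun M ↦ 𝔼 Z ∈ indepSubsets H M, (#(inducedEdges (H.memberSubfamily v) Z) : ℝ)
  set B : Finset V → ℝ := fun M ↦ 𝔼 Z ∈ indepSubsets H M, (if v ∈ Z then 1 else 0 : ℝ)
  have hA (M : Finset V) : 0 ≤ A M := expect_nonneg fun _ _ ↦ Nat.cast_nonneg _
  have hB (M : Finset V) : 0 ≤ B M := expect_nonneg fun _ _ ↦ by positivity
  have hAB (M : Finset V) : 0 ≤ bernoulliWeight p M * (A (M.erase v) + K * 2 ^ K * B M) :=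
    mul_nonneg (hw M) (add_nonneg (hA _) (mul_nonneg (by positivity) (hB M)))
  calc K / 2 ^ (r + 1) * ∑ M with v ∈ M ∧ IsSparseAt H (M.erase v) v, bernoulliWeight p M
      ≤ ∑ M with v ∈ M ∧ IsSparseAt H (M.erase v) v,
          bernoulliWeight p M * (A (M.erase v) + K * 2 ^ K * B M) := by
        rw [mul_comm, sum_mul]
        refine sum_le_sum fun M hM ↦ mul_le_mul_of_nonneg_left ?_ (hw M)
        obtain ⟨hv, hsparse⟩ := (mem_filter.1 hM).2
        exact hsparse.div_le_expect_add_expect hv hH hr K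
    _ ≤ ∑ M with v ∈ M, bernoulliWeight p M * (A (M.erase v) + K * 2 ^ K * B M) :=
        sum_le_sum_of_subset_of_nonneg (monotone_filter_right _ fun _ _ h ↦ h.1)
          fun M _ _ ↦ hAB M
    _ = ∑ M with v ∈ M, bernoulliWeight p M * A (M.erase v) +
          K * 2 ^ K * ∑ M with v ∈ M, bernoulliWeight p M * B M := by
        rw [mul_sum, ← sum_add_distrib]
        exact sum_congr rfl fun M _ ↦ by ring
    _ ≤ 2 * p * ∑ M, bernoulliWeight p M * A M +
          K * 2 ^ K * ∑ M, bernoulliWeight p M * B M := by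
        refine add_le_add (sum_bernoulliWeight_mul_erase_le hp hp2 hA v)
          (mul_le_mul_of_nonneg_left ?_ (by positivity))
        exact sum_le_univ_sum_of_nonneg fun M ↦ mul_nonneg (hw M) (hB M)

lemma div_mul_sum_sum_bernoulliWeight_isSparseAt_le (hH : ∀ e ∈ H, #e = r + 1) (hr : 1 ≤ r)
    (hd : maxDegLe r H d) (ht : ∀ Z, IsIndep H Z → #Z ≤ t) (hp : 0 ≤ p) (hp2 : p ≤ 1 / 2)
    (K : ℕ) :
    K / 2 ^ (r + 1) * ∑ v, ∑ M with v ∈ M ∧ IsSparseAt H (M.erase v) v, bernoulliWeight p M ≤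
      2 * p * (t ^ r * d) + K * 2 ^ K * t := by
  have hp1 : p ≤ 1 := by linarith
  have hswap (f : V → Finset V → ℝ) : ∑ v, ∑ M, bernoulliWeight p M * f v M =
      ∑ M, bernoulliWeight p M * ∑ v, f v M := by
    simp only [mul_sum]
    exact sum_comm
  rw [mul_sum]
  refine (sum_le_sum fun v _ ↦
    div_mul_sum_bernoulliWeight_isSparseAt_le hH hr hp hp2 K v).trans ?_
  rw [sum_add_distrib, ← mul_sum, ← mul_sum, hswap, hswap]
  gcongr
  · exact sum_bernoulliWeight_mul_le hp hp1 (sum_expect_card_inducedEdges_le hH hd ht)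
  · exact sum_bernoulliWeight_mul_le hp hp1
      (sum_expect_mem_le (empty_notMem_of_uniform hH le_add_self) ht)

end Averaging

section Configurations

variable {V : Type*} [DecidableEq V] {H : Finset (Finset V)} {M : Finset V} {v : V} {r : ℕ}

lemma card_inter_le_of_not_subset {f U : Finset V} (hf : #f = r + 1) (hfU : ¬ f ⊆ U) :
    #(f ∩ U) ≤ r := by
  have := card_lt_card (inter_subset_left.ssubset_of_ne (mt inter_eq_left.1 hfU))
  lia

lemma exists_mem_of_mem_neighborsIn_erase (hv : v ∈ M) {x : V}
    (hx : x ∈ neighborsIn H (M.erase v) v) : ∃ e ∈ H, v ∈ e ∧ x ∈ e ∧ e ⊆ M := by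
  obtain ⟨S, hS, hxS⟩ := mem_neighborsIn.1 hx
  obtain ⟨hSH, hSM⟩ := mem_inducedEdges.1 hS
  exact ⟨insert v S, (mem_memberSubfamily.1 hSH).1, mem_insert_self v S, mem_insert_of_mem hxS,
    insert_subset hv (hSM.trans (erase_subset v M))⟩

lemma exists_union_subset_of_not_isSparseAt (hH : ∀ e ∈ H, #e = r + 1) (hr : 2 ≤ r) (hv : v ∈ M)
    (hM : ¬ IsSparseAt H (M.erase v) v) :
    ∃ e₁ ∈ ({e ∈ H | v ∈ e} : Finset (Finset V)), ∃ e₂ ∈ ({e ∈ H | v ∈ e} : Finset (Finset V)),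
      ∃ f ∈ {f ∈ H | #(f ∩ (e₁ ∪ e₂)) ∈ Set.Icc 2 r}, e₁ ∪ e₂ ∪ f ⊆ M := by
  simp only [IsSparseAt, not_forall, not_le] at hM
  obtain ⟨f, hf, hfMv, hcard⟩ := hM
  obtain ⟨hfM, hvf⟩ := subset_erase.1 hfMv
  obtain ⟨x, hx, y, hy, hxy⟩ := one_lt_card.1 hcard
  obtain ⟨hxf, hxN⟩ := mem_inter.1 hx
  obtain ⟨hyf, hyN⟩ := mem_inter.1 hy
  obtain ⟨e₁, he₁, hve₁, hxe₁, he₁M⟩ := exists_mem_of_mem_neighborsIn_erase hv hxN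
  obtain ⟨e₂, he₂, hve₂, hye₂, he₂M⟩ := exists_mem_of_mem_neighborsIn_erase hv hyN
  have hsingle : ∀ e ∈ H, v ∈ e → #(f ∩ e) ≤ r := fun e he hve ↦
    card_inter_le_of_not_subset (hH f hf) fun hfe ↦
      hvf (eq_of_subset_of_card_le hfe (by rw [hH e he, hH f hf]) ▸ hve)
  suffices ∃ e ∈ H, ∃ e' ∈ H, v ∈ e ∧ v ∈ e' ∧ e ∪ e' ⊆ M ∧ #(f ∩ (e ∪ e')) ∈ Set.Icc 2 r by
    obtain ⟨e, he, e', he', hve, hve', hM, hcard⟩ := this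
    exact ⟨e, mem_filter.2 ⟨he, hve⟩, e', mem_filter.2 ⟨he', hve'⟩, f,
      mem_filter.2 ⟨hf, hcard⟩, union_subset hM hfM⟩
  by_cases hcover : f ⊆ e₁ ∪ e₂
  · -- Then `#(f ∩ e₁) + #(f ∩ e₂) ≥ r + 1 ≥ 3`, so `f` meets `e₁` or `e₂` in two vertices.
    have hsum : r + 1 ≤ #(f ∩ e₁) + #(f ∩ e₂) := calc
      r + 1 = #(f ∩ e₁ ∪ f ∩ e₂) := by
        rw [← inter_union_distrib_left, inter_eq_left.2 hcover, hH f hf]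
      _ ≤ #(f ∩ e₁) + #(f ∩ e₂) := card_union_le _ _
    obtain h₁ | h₂ : 2 ≤ #(f ∩ e₁) ∨ 2 ≤ #(f ∩ e₂) := by lia
    · exact ⟨e₁, he₁, e₁, he₁, hve₁, hve₁, by rwa [union_self],
        by rw [union_self]; exact ⟨h₁, hsingle e₁ he₁ hve₁⟩⟩
    · exact ⟨e₂, he₂, e₂, he₂, hve₂, hve₂, by rwa [union_self],
        by rw [union_self]; exact ⟨h₂, hsingle e₂ he₂ hve₂⟩⟩
  · have htwo : 2 ≤ #(f ∩ (e₁ ∪ e₂)) := one_lt_card.2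
      ⟨x, mem_inter.2 ⟨hxf, mem_union_left _ hxe₁⟩, y,
        mem_inter.2 ⟨hyf, mem_union_right _ hye₂⟩, hxy⟩
    exact ⟨e₁, he₁, e₂, he₂, hve₁, hve₂, union_subset he₁M he₂M, htwo,
      card_inter_le_of_not_subset (hH f hf) hcover⟩

lemma pow_card_union (p : ℝ) (U e : Finset V) : p ^ #(U ∪ e) = p ^ #U * p ^ #(e \ U) := by
  rw [← pow_add, ← union_sdiff_self_eq_union, card_union_of_disjoint disjoint_sdiff]

end Configurations

section NonSparse

variable {V : Type*} [Fintype V] [DecidableEq V] {H : Finset (Finset V)} {v : V} {r d : ℕ}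
  {p D ε : ℝ}

lemma card_filter_superset_le (hH : ∀ e ∈ H, #e = r + 1) (hd : maxDegLe r H d) {k : ℕ}
    {J : Finset V} (hJ : #J + k = r) : #{e ∈ H | J ⊆ e} ≤ Fintype.card V ^ k * d := by
  induction k generalizing J with
  | zero => simpa using hd J hJ
  | succ k ih =>
    have hcover : {e ∈ H | J ⊆ e} ⊆ Jᶜ.biUnion fun x ↦ {e ∈ H | insert x J ⊆ e} := fun e he ↦ by
      obtain ⟨heH, hJe⟩ := mem_filter.1 he
      obtain ⟨x, hxe, hxJ⟩ := exists_mem_notMem_of_card_lt_card (s := J) (t := e)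
        (by rw [hH e heH]; lia)
      exact mem_biUnion.2
        ⟨x, mem_compl.2 hxJ, mem_filter.2 ⟨heH, insert_subset hxe hJe⟩⟩
    calc #{e ∈ H | J ⊆ e} ≤ #(Jᶜ.biUnion fun x ↦ {e ∈ H | insert x J ⊆ e}) := card_le_card hcover
      _ ≤ #Jᶜ * (Fintype.card V ^ k * d) := card_biUnion_le_card_mul _ _ _ fun x hx ↦ ih (by
          rw [card_insert_of_notMem (mem_compl.1 hx)]
          lia)
      _ ≤ Fintype.card V * (Fintype.card V ^ k * d) := by gcongr; exact card_le_univ _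
      _ = Fintype.card V ^ (k + 1) * d := by ring

lemma sum_pow_card_sdiff_inter_eq_le (hH : ∀ e ∈ H, #e = r + 1) (hd : maxDegLe r H d)
    (hp : 0 ≤ p) {J : Finset V} (hJ : #J ≤ r) (U : Finset V) :
    ∑ e ∈ H with e ∩ U = J, p ^ #(e \ U) ≤ d * p * (Fintype.card V * p) ^ (r - #J) := by
  have hterm : ∀ e ∈ ({e ∈ H | e ∩ U = J} : Finset (Finset V)),
      p ^ #(e \ U) = p ^ (r - #J + 1) := fun e he ↦ by
    obtain ⟨heH, heJ⟩ := mem_filter.1 he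
    have := card_sdiff_add_card_inter e U
    rw [heJ, hH e heH] at this
    congr 1
    lia
  have hcount : #{e ∈ H | e ∩ U = J} ≤ Fintype.card V ^ (r - #J) * d :=
    (card_le_card (monotone_filter_right _ fun e _ he ↦ he ▸ inter_subset_left)).trans
      (card_filter_superset_le hH hd (Nat.add_sub_cancel' hJ))
  calc ∑ e ∈ H with e ∩ U = J, p ^ #(e \ U) = #{e ∈ H | e ∩ U = J} * p ^ (r - #J + 1) := by
        rw [sum_congr rfl hterm, sum_const, nsmul_eq_mul]
    _ ≤ (Fintype.card V ^ (r - #J) * d) * p ^ (r - #J + 1) := by gcongr; exact_mod_cast hcount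
    _ = d * p * (Fintype.card V * p) ^ (r - #J) := by ring

lemma sum_pow_card_union_inter_mem_Icc_le (hH : ∀ e ∈ H, #e = r + 1) (hd : maxDegLe r H d)
    (hp : 0 ≤ p) (hm : 1 ≤ Fintype.card V * p) (i : ℕ) (U : Finset V) :
    ∑ e ∈ H with #(e ∩ U) ∈ Set.Icc i r, p ^ #(U ∪ e) ≤
      p ^ #U * (2 ^ #U * (d * p * (Fintype.card V * p) ^ (r - i))) := by
  simp only [pow_card_union, ← mul_sum]
  gcongr
  have hmaps : ∀ e ∈ ({e ∈ H | #(e ∩ U) ∈ Set.Icc i r} : Finset (Finset V)),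
      e ∩ U ∈ U.powerset := fun e _ ↦ mem_powerset.2 inter_subset_right
  rw [← sum_fiberwise_of_maps_to hmaps]
  refine (sum_le_card_nsmul _ _ (d * p * (Fintype.card V * p) ^ (r - i)) fun J _ ↦ ?_).trans_eq
    (by simp)
  rw [filter_filter]
  by_cases hJ : #J ∈ Set.Icc i r
  · calc ∑ e ∈ H with #(e ∩ U) ∈ Set.Icc i r ∧ e ∩ U = J, p ^ #(e \ U)
        ≤ ∑ e ∈ H with e ∩ U = J, p ^ #(e \ U) :=
          sum_le_sum_of_subset_of_nonneg (monotone_filter_right _ fun _ _ h ↦ h.2)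
            fun _ _ _ ↦ by positivity
      _ ≤ d * p * (Fintype.card V * p) ^ (r - #J) :=
          sum_pow_card_sdiff_inter_eq_le hH hd hp hJ.2 U
      _ ≤ d * p * (Fintype.card V * p) ^ (r - i) := by
          gcongr
          exact hJ.1
  · rw [filter_false_of_mem, sum_empty]
    · positivity
    · rintro e - ⟨he, rfl⟩
      exact hJ he

lemma sum_pow_card_union_mem_le (hH : ∀ e ∈ H, #e = r + 1) (hd : maxDegLe r H d)
    (hp : 0 ≤ p) (hm : 1 ≤ Fintype.card V * p) (hD : 1 ≤ D)
    (hdD : d * p * (Fintype.card V * p) ^ (r - 1) ≤ D) {U : Finset V} (hv : v ∈ U) :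
    ∑ e ∈ H with v ∈ e, p ^ #(U ∪ e) ≤ p ^ #U * (2 ^ (#U + 1) * D) := by
  have hcases : ({e ∈ H | v ∈ e} : Finset (Finset V)) ⊆
      U.powerset ∪ {e ∈ H | #(e ∩ U) ∈ Set.Icc 1 r} := fun e he ↦ by
    obtain ⟨heH, hve⟩ := mem_filter.1 he
    by_cases heU : e ⊆ U
    · exact mem_union_left _ (mem_powerset.2 heU)
    · exact mem_union_right _ (mem_filter.2 ⟨heH, card_pos.2 ⟨v, mem_inter.2 ⟨hve, hv⟩⟩,
        card_inter_le_of_not_subset (hH e heH) heU⟩)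
  have hinside : ∑ e ∈ U.powerset, p ^ #(U ∪ e) = p ^ #U * 2 ^ #U := by
    rw [sum_congr rfl fun e he ↦ by rw [union_eq_left.2 (mem_powerset.1 he)], sum_const,
      card_powerset, nsmul_eq_mul, mul_comm]
    norm_cast
  calc ∑ e ∈ H with v ∈ e, p ^ #(U ∪ e)
      ≤ ∑ e ∈ U.powerset ∪ {e ∈ H | #(e ∩ U) ∈ Set.Icc 1 r}, p ^ #(U ∪ e) :=
        sum_le_sum_of_subset_of_nonneg hcases fun _ _ _ ↦ by positivity
    _ ≤ ∑ e ∈ U.powerset, p ^ #(U ∪ e) + ∑ e ∈ H with #(e ∩ U) ∈ Set.Icc 1 r, p ^ #(U ∪ e) := by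
        rw [← sum_union_inter]
        exact le_add_of_nonneg_right (sum_nonneg fun _ _ ↦ by positivity)
    _ ≤ p ^ #U * (2 ^ #U * 1) + p ^ #U * (2 ^ #U * (d * p * (Fintype.card V * p) ^ (r - 1))) := by
        rw [hinside, mul_one]
        gcongr
        exact sum_pow_card_union_inter_mem_Icc_le hH hd hp hm 1 U
    _ ≤ p ^ #U * (2 ^ #U * D) + p ^ #U * (2 ^ #U * D) := by gcongr
    _ = p ^ #U * (2 ^ (#U + 1) * D) := by ring

lemma sum_pow_card_union_union_le (hH : ∀ e ∈ H, #e = r + 1) (hd : maxDegLe r H d)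
    (hp : 0 ≤ p) (hm : 1 ≤ Fintype.card V * p) (hD : 1 ≤ D)
    (hdD : d * p * (Fintype.card V * p) ^ (r - 1) ≤ D)
    (hdε : d * p * (Fintype.card V * p) ^ (r - 2) ≤ ε) (v : V) :
    ∑ e₁ ∈ H with v ∈ e₁, ∑ e₂ ∈ H with v ∈ e₂,
      ∑ f ∈ H with #(f ∩ (e₁ ∪ e₂)) ∈ Set.Icc 2 r, p ^ #(e₁ ∪ e₂ ∪ f) ≤
      p * (2 ^ (3 * r + 6) * D ^ 2 * ε) := by
  have hε : 0 ≤ ε := (by positivity : (0 : ℝ) ≤ _).trans hdε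
  have hmem {e : Finset V} (he : e ∈ ({e ∈ H | v ∈ e} : Finset (Finset V))) :
      #e = r + 1 ∧ v ∈ e := (mem_filter.1 he).imp_left (hH e)
  calc _ ≤ ∑ e₁ ∈ H with v ∈ e₁, ∑ e₂ ∈ H with v ∈ e₂, p ^ #(e₁ ∪ e₂) * (2 ^ (2 * r + 2) * ε) := by
        refine sum_le_sum fun e₁ he₁ ↦ sum_le_sum fun e₂ he₂ ↦
          (sum_pow_card_union_inter_mem_Icc_le hH hd hp hm 2 (e₁ ∪ e₂)).trans ?_
        have hcard : #(e₁ ∪ e₂) ≤ 2 * r + 2 := by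
          have := card_union_le e₁ e₂
          have := (hmem he₁).1
          have := (hmem he₂).1
          lia
        gcongr
        norm_num
    _ ≤ ∑ e₁ ∈ H with v ∈ e₁, p ^ #({v} ∪ e₁) * (2 ^ (r + 2) * D) * (2 ^ (2 * r + 2) * ε) := by
        refine sum_le_sum fun e₁ he₁ ↦ ?_
        obtain ⟨hcard, hve₁⟩ := hmem he₁
        rw [← sum_mul, singleton_union, insert_eq_of_mem hve₁]
        gcongr
        simpa only [hcard] using sum_pow_card_union_mem_le hH hd hp hm hD hdD hve₁
    _ ≤ p * (2 ^ (1 + 1) * D) * (2 ^ (r + 2) * D) * (2 ^ (2 * r + 2) * ε) := by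
        rw [← sum_mul, ← sum_mul]
        gcongr
        simpa only [card_singleton, pow_one] using
          sum_pow_card_union_mem_le hH hd hp hm hD hdD (mem_singleton_self v)
    _ = p * (2 ^ (3 * r + 6) * D ^ 2 * ε) := by ring

lemma sum_bernoulliWeight_not_isSparseAt_le (hH : ∀ e ∈ H, #e = r + 1) (hr : 2 ≤ r)
    (hd : maxDegLe r H d) (hp : 0 ≤ p) (hp1 : p ≤ 1) (hm : 1 ≤ Fintype.card V * p) (hD : 1 ≤ D)
    (hdD : d * p * (Fintype.card V * p) ^ (r - 1) ≤ D)
    (hdε : d * p * (Fintype.card V * p) ^ (r - 2) ≤ ε) (v : V) :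
    ∑ M with v ∈ M ∧ ¬ IsSparseAt H (M.erase v) v, bernoulliWeight p M ≤
      p * (2 ^ (3 * r + 6) * D ^ 2 * ε) := by
  set I := ({e ∈ H | v ∈ e} : Finset (Finset V)).sigma fun e₁ ↦
    ({e ∈ H | v ∈ e} : Finset (Finset V)).sigma fun e₂ ↦
      ({f ∈ H | #(f ∩ (e₁ ∪ e₂)) ∈ Set.Icc 2 r} : Finset (Finset V))
  refine (sum_bernoulliWeight_filter_le (I := I) (Q := fun i ↦ i.1 ∪ i.2.1 ∪ i.2.2) hp hp1
    ?_).trans ?_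
  · rintro M ⟨hv, hM⟩
    obtain ⟨e₁, he₁, e₂, he₂, f, hf, hM⟩ := exists_union_subset_of_not_isSparseAt hH hr hv hM
    exact ⟨⟨e₁, e₂, f⟩, mem_sigma.2 ⟨he₁, mem_sigma.2 ⟨he₂, hf⟩⟩, hM⟩
  · simp only [I, sum_sigma]
    exact sum_pow_card_union_union_le hH hd hp hm hD hdD hdε v

end NonSparse

section MainInequality

variable {V : Type*} [Fintype V] [DecidableEq V] {H : Finset (Finset V)} {r d t : ℕ} {m D : ℝ}

lemma div_two_le_sum_bernoulliWeight_isSparseAt (hH : ∀ e ∈ H, #e = r + 1) (hr : 2 ≤ r)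
    (hd : maxDegLe r H d) {p ε : ℝ} (hp : 0 ≤ p) (hp1 : p ≤ 1) (hm : 1 ≤ Fintype.card V * p)
    (hD : 1 ≤ D) (hdD : d * p * (Fintype.card V * p) ^ (r - 1) ≤ D)
    (hdε : d * p * (Fintype.card V * p) ^ (r - 2) ≤ ε) (hDε : 2 ^ (3 * r + 7) * D ^ 2 * ε ≤ 1)
    (v : V) :
    p / 2 ≤ ∑ M with v ∈ M ∧ IsSparseAt H (M.erase v) v, bernoulliWeight p M := by
  have hsplit := sum_filter_add_sum_filter_not ({M | v ∈ M} : Finset (Finset V))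
    (fun M ↦ IsSparseAt H (M.erase v) v) (bernoulliWeight p)
  rw [filter_filter, filter_filter, sum_bernoulliWeight_mem] at hsplit
  have hbad := sum_bernoulliWeight_not_isSparseAt_le hH hr hd hp hp1 hm hD hdD hdε v
  have hhalf : p * (2 ^ (3 * r + 6) * D ^ 2 * ε) ≤ p * (1 / 2) := by
    gcongr
    rw [pow_succ] at hDε
    linarith
  linarith

lemma div_mul_le_add_of_maxDegLe (hH : ∀ e ∈ H, #e = r + 1) (hr : 2 ≤ r) (hd : maxDegLe r H d)
    (ht : ∀ Z, IsIndep H Z → #Z ≤ t) (hm : 1 ≤ m) (hmV : 2 * m ≤ Fintype.card V) (hD : 1 ≤ D)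
    (hdD : d * m ^ r ≤ D * Fintype.card V) (hDm : 2 ^ (3 * r + 7) * D ^ 3 ≤ m) (K : ℕ) :
    K / 2 ^ (r + 2) * m ≤ 2 * (m / Fintype.card V) * (t ^ r * d) + K * 2 ^ K * t := by
  have hm0 : 0 < m := by linarith
  have hV : (0 : ℝ) < Fintype.card V := by linarith
  set p := m / Fintype.card V with hp
  have hp2 : p ≤ 1 / 2 := by
    rw [hp, div_le_iff₀ hV]
    linarith
  have hVp : Fintype.card V * p = m := mul_div_cancel₀ m hV.ne'
  have hdeg : d * p * m ^ (r - 1) ≤ D := by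
    rw [hp, mul_div_assoc', div_mul_eq_mul_div, mul_assoc, mul_pow_sub_one (by lia),
      div_le_iff₀ hV]
    exact hdD
  have hcodeg : d * p * m ^ (r - 2) ≤ D / m := by
    rwa [le_div_iff₀ hm0, mul_assoc, ← pow_succ, show r - 2 + 1 = r - 1 by lia]
  have hsmall : 2 ^ (3 * r + 7) * D ^ 2 * (D / m) ≤ 1 := by
    rw [mul_div_assoc', div_le_one hm0, mul_assoc, ← pow_succ]
    exact hDm
  have hsparse (v : V) :
      p / 2 ≤ ∑ M with v ∈ M ∧ IsSparseAt H (M.erase v) v, bernoulliWeight p M :=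
    div_two_le_sum_bernoulliWeight_isSparseAt hH hr hd (by positivity) (by linarith)
      (by rwa [hVp]) hD (by rwa [hVp]) (by rwa [hVp]) hsmall v
  calc K / 2 ^ (r + 2) * m = K / 2 ^ (r + 1) * ∑ _v : V, p / 2 := by
        rw [sum_const, card_univ, nsmul_eq_mul, mul_div_assoc', hVp]
        ring
    _ ≤ K / 2 ^ (r + 1) *
          ∑ v, ∑ M with v ∈ M ∧ IsSparseAt H (M.erase v) v, bernoulliWeight p M := by
        gcongr with v
        exact hsparse v
    _ ≤ 2 * p * (t ^ r * d) + K * 2 ^ K * t :=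
        div_mul_sum_sum_bernoulliWeight_isSparseAt_le hH (by lia) hd ht (by positivity) hp2 K

end MainInequality

section Optimization

variable {r : ℕ} {s : ℝ}

lemma two_pow_floor_log_le (hs : 1 ≤ s) : (2 : ℝ) ^ ⌊Real.log s⌋₊ ≤ s :=
  calc (2 : ℝ) ^ ⌊Real.log s⌋₊ ≤ Real.exp 1 ^ ⌊Real.log s⌋₊ := by
        gcongr
        linarith [Real.add_one_le_exp 1]
    _ = Real.exp ⌊Real.log s⌋₊ := by rw [← Real.exp_nat_mul, mul_one]
    _ ≤ Real.exp (Real.log s) := by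
        gcongr
        exact Nat.floor_le (Real.log_nonneg hs)
    _ = s := Real.exp_log (by linarith)

lemma log_le_two_mul_floor_log (hs : Real.exp 1 ≤ s) : Real.log s ≤ 2 * ⌊Real.log s⌋₊ := by
  have hs0 : 0 < s := (Real.exp_pos 1).trans_le hs
  have hone : (1 : ℝ) ≤ ⌊Real.log s⌋₊ := mod_cast
    Nat.le_floor ((Nat.cast_one (R := ℝ)).trans_le ((Real.le_log_iff_exp_le hs0).2 hs))
  linarith [Nat.lt_floor_add_one (Real.log s)]

lemma mul_le_of_div_mul_le_add {m x k T E : ℝ} (hm : 0 < m) (hx : 0 < x)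
    (h : k / 2 ^ (r + 2) * m ≤ 2 * (m / x) * T + E) (hE : E ≤ k * (m / 2 ^ (r + 3))) :
    k * x ≤ 2 ^ (r + 4) * T := by
  have hcancel : m * (k / 2 ^ (r + 3)) ≤ m * (2 * T / x) := by
    have hsplit : k / 2 ^ (r + 2) * m = m * (k / 2 ^ (r + 3)) + k * (m / 2 ^ (r + 3)) := by ring
    calc m * (k / 2 ^ (r + 3)) ≤ 2 * (m / x) * T := by linarith
      _ = m * (2 * T / x) := by ring
  have hdiv := le_of_mul_le_mul_left hcancel hm
  rw [div_le_div_iff₀ (by positivity) hx] at hdiv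
  exact hdiv.trans_eq (by ring)

lemma pow_mul_log_le_of_div_mul_le_add (hr : 2 ≤ r) (hs : Real.exp 1 ≤ s) {t : ℝ} (ht : 0 ≤ t)
    (h : ⌊Real.log s⌋₊ / 2 ^ (r + 2) * s ^ (8 * r + 2) ≤
      2 * (s ^ (8 * r + 2) / s ^ (8 * r ^ 2)) * t ^ r +
        ⌊Real.log s⌋₊ * 2 ^ ⌊Real.log s⌋₊ * t) :
    s ^ (8 * r ^ 2) * Real.log s ≤ 2 ^ (r * (r + 3)) * t ^ r := by
  have hs2 : 2 ≤ s := by linarith [Real.add_one_le_exp 1]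
  have hlog := log_le_two_mul_floor_log hs
  have hpow := two_pow_floor_log_le (by linarith : 1 ≤ s)
  set K := ⌊Real.log s⌋₊
  obtain hsmall | hlarge := le_total (2 ^ K * t) (s ^ (8 * r + 2) / 2 ^ (r + 3))
  · have hK : K * s ^ (8 * r ^ 2) ≤ 2 ^ (r + 4) * t ^ r := by
      refine mul_le_of_div_mul_le_add (by positivity) (by positivity) h ?_
      rw [mul_assoc]
      gcongr
    have hexp : r + 5 ≤ r * (r + 3) := by nlinarith
    calc s ^ (8 * r ^ 2) * Real.log s ≤ s ^ (8 * r ^ 2) * (2 * K) := by gcongr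
      _ = 2 * (K * s ^ (8 * r ^ 2)) := by ring
      _ ≤ 2 * (2 ^ (r + 4) * t ^ r) := by gcongr
      _ = 2 ^ (r + 5) * t ^ r := by ring
      _ ≤ 2 ^ (r * (r + 3)) * t ^ r := by gcongr; norm_num
  · have hroot : s ^ (8 * r + 1) ≤ 2 ^ (r + 3) * t := by
      rw [div_le_iff₀ (by positivity)] at hlarge
      refine le_of_mul_le_mul_right ?_ (by linarith : 0 < s)
      calc s ^ (8 * r + 1) * s ≤ 2 ^ K * t * 2 ^ (r + 3) := hlarge
        _ ≤ s * t * 2 ^ (r + 3) := by gcongr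
        _ = 2 ^ (r + 3) * t * s := by ring
    calc s ^ (8 * r ^ 2) * Real.log s ≤ s ^ (8 * r ^ 2) * s ^ r := by
          gcongr
          exact (Real.log_le_self (by linarith)).trans (le_self_pow₀ (by linarith) (by lia))
      _ = (s ^ (8 * r + 1)) ^ r := by ring
      _ ≤ (2 ^ (r + 3) * t) ^ r := by gcongr
      _ = 2 ^ (r * (r + 3)) * t ^ r := by rw [mul_pow, ← pow_mul, mul_comm r]

end Optimization

section IndependenceNumber

variable {V : Type*} [Fintype V] [DecidableEq V] {H : Finset (Finset V)} {r d : ℕ}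

lemma IsIndep.card_le_indepNum {Z : Finset V} (hZ : IsIndep H Z) : #Z ≤ indepNum H :=
  le_sup (f := card) (by simpa using hZ)

lemma one_le_indepNum [Nonempty V] (hH : ∀ e ∈ H, 1 < #e) : 1 ≤ indepNum H := by
  obtain ⟨v⟩ := ‹Nonempty V›
  have hv : IsIndep H {v} := fun e he hev ↦ (hH e he).not_ge (card_le_card hev)
  exact hv.card_le_indepNum

lemma pow_mul_log_le_indepNum_pow (hH : ∀ e ∈ H, #e = r + 1) (hr : 2 ≤ r) (hd : maxDegLe r H d)
    (hd1 : 1 ≤ d) {s : ℝ} (hs : 16 ≤ s) (hsV : (Fintype.card V : ℝ) / d = s ^ (8 * r ^ 2)) :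
    s ^ (8 * r ^ 2) * Real.log s ≤ 2 ^ (r * (r + 3)) * (indepNum H : ℝ) ^ r := by
  have hs1 : 1 ≤ s := by linarith
  have hd0 : (1 : ℝ) ≤ d := mod_cast hd1
  have hV : (Fintype.card V : ℝ) = s ^ (8 * r ^ 2) * d := (div_eq_iff (by positivity)).1 hsV
  have hmV : 2 * s ^ (8 * r + 2) ≤ Fintype.card V :=
    calc 2 * s ^ (8 * r + 2) ≤ s * s ^ (8 * r + 2) := by gcongr; linarith
      _ = s ^ (8 * r + 3) := by ring
      _ ≤ s ^ (8 * r ^ 2) := pow_le_pow_right₀ hs1 (by nlinarith)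
      _ ≤ Fintype.card V := hV ▸ le_mul_of_one_le_right (by positivity) hd0
  have hdm : d * (s ^ (8 * r + 2)) ^ r ≤ s ^ (2 * r) * Fintype.card V := by
    rw [hV]
    exact le_of_eq (by ring)
  have hDm : 2 ^ (3 * r + 7) * (s ^ (2 * r)) ^ 3 ≤ s ^ (8 * r + 2) :=
    calc 2 ^ (3 * r + 7) * (s ^ (2 * r)) ^ 3 ≤ 2 ^ (4 * (2 * r + 2)) * (s ^ (2 * r)) ^ 3 := by
          gcongr
          · norm_num
          · lia
      _ = 16 ^ (2 * r + 2) * (s ^ (2 * r)) ^ 3 := by rw [pow_mul]; norm_num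
      _ ≤ s ^ (2 * r + 2) * (s ^ (2 * r)) ^ 3 := by gcongr
      _ = s ^ (8 * r + 2) := by ring
  have hmain := div_mul_le_add_of_maxDegLe hH hr hd (fun Z hZ ↦ IsIndep.card_le_indepNum hZ)
    (one_le_pow₀ hs1) hmV (one_le_pow₀ hs1) hdm hDm ⌊Real.log s⌋₊
  refine pow_mul_log_le_of_div_mul_le_add hr (by linarith [Real.exp_one_lt_three])
    (Nat.cast_nonneg _) (hmain.trans_eq ?_)
  rw [hV]
  field_simp

end IndependenceNumber

section Conclusion

lemma abs_mul_log_le {x B : ℝ} (hx : 0 < x) (hB : 1 ≤ B) (hxB : x ≤ B) :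
    |x * Real.log x| ≤ B ^ 2 := by
  obtain hx1 | hx1 := le_total x 1
  · calc |x * Real.log x| = |Real.log x * x| := by rw [mul_comm]
      _ ≤ 1 := (Real.abs_log_mul_self_lt x hx hx1).le
      _ ≤ B ^ 2 := one_le_pow₀ hB
  · rw [abs_of_nonneg (mul_nonneg hx.le (Real.log_nonneg hx1)), sq]
    exact mul_le_mul hxB ((Real.log_le_self hx.le).trans hxB) (Real.log_nonneg hx1) (by linarith)

lemma exists_pow_eq_and_log_eq {x b : ℝ} (hb : 0 ≤ b) {k : ℕ} (hk : k ≠ 0) (hx : b ^ k ≤ x) :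
    ∃ s, b ≤ s ∧ s ^ k = x ∧ Real.log x = k * Real.log s := by
  have hx0 : 0 ≤ x := (pow_nonneg hb k).trans hx
  have hroot : (x ^ (k⁻¹ : ℝ)) ^ k = x := Real.rpow_inv_natCast_pow hx0 hk
  refine ⟨x ^ (k⁻¹ : ℝ), ?_, hroot, ?_⟩
  · exact le_of_pow_le_pow_left₀ hk (by positivity) (hx.trans_eq hroot.symm)
  · rw [← Real.log_pow, hroot]

lemma abs_mul_log_le_mul_indepNum_pow {V : Type*} [Fintype V] [DecidableEq V] [Nonempty V]
    {H : Finset (Finset V)} {r d : ℕ} (hH : ∀ e ∈ H, #e = r + 1) (hr : 2 ≤ r)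
    (hd : maxDegLe r H d) (hd1 : 1 ≤ d) :
    |(Fintype.card V : ℝ) / d * Real.log (Fintype.card V / d)| ≤
      (((16 : ℝ) ^ (8 * r ^ 2)) ^ 2 + 8 * r ^ 2 * 2 ^ (r * (r + 3))) * (indepNum H : ℝ) ^ r := by
  set x := (Fintype.card V : ℝ) / d
  have hx0 : 0 < x := div_pos (mod_cast Fintype.card_pos) (mod_cast hd1)
  have hα : (1 : ℝ) ≤ indepNum H := mod_cast one_le_indepNum fun e he ↦ by rw [hH e he]; lia
  rw [add_mul]
  obtain hsmall | hlarge := le_total x (16 ^ (8 * r ^ 2))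
  · refine le_add_of_le_of_nonneg ?_ (by positivity)
    exact (abs_mul_log_le hx0 (one_le_pow₀ (by norm_num)) hsmall).trans
      (le_mul_of_one_le_right (by positivity) (one_le_pow₀ hα))
  · obtain ⟨s, hs, hsx, hlog⟩ :=
      exists_pow_eq_and_log_eq (by norm_num) (by positivity : 8 * r ^ 2 ≠ 0) hlarge
    have hx1 : 1 ≤ x := (one_le_pow₀ (by norm_num)).trans hlarge
    refine le_add_of_nonneg_of_le (by positivity) ?_
    rw [abs_of_nonneg (mul_nonneg hx0.le (Real.log_nonneg hx1))]
    calc x * Real.log x = 8 * r ^ 2 * (s ^ (8 * r ^ 2) * Real.log s) := by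
          rw [hlog, hsx]
          push_cast
          ring
      _ ≤ 8 * r ^ 2 * (2 ^ (r * (r + 3)) * (indepNum H : ℝ) ^ r) := by
          gcongr 8 * r ^ 2 * ?_
          exact pow_mul_log_le_indepNum_pow hH hr hd hd1 hs hsx.symm
      _ = 8 * r ^ 2 * 2 ^ (r * (r + 3)) * (indepNum H : ℝ) ^ r := by ring

end Conclusion

-- The absolute value avoids the junk value of `Real.rpow` at a negative base, when `n < d`.
theorem stmt0_general (r : ℕ) (hr : 2 ≤ r) :
    ∃ c : ℝ, 0 < c ∧
      ∀ (V : Type*) [Fintype V] [DecidableEq V], ∀ (n d : ℕ) (H : Finset (Finset V)),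
        Fintype.card V = n → 1 ≤ n → 1 ≤ d →
        (∀ e ∈ H, #e = r + 1) →
        maxDegLe r H d →
        c * |((n : ℝ) / d) * Real.log ((n : ℝ) / d)| ^ ((1 : ℝ) / r) ≤ (indepNum H : ℝ) := by
  set C : ℝ := ((16 : ℝ) ^ (8 * r ^ 2)) ^ 2 + 8 * r ^ 2 * 2 ^ (r * (r + 3))
  have hC : 0 < C := by positivity
  refine ⟨(C ^ ((1 : ℝ) / r))⁻¹, by positivity, fun V _ _ n d H hV hn hd1 hH hd ↦ ?_⟩
  subst hV
  have : Nonempty V := Fintype.card_pos_iff.1 hn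
  rw [inv_mul_le_iff₀ (by positivity)]
  calc |(Fintype.card V : ℝ) / d * Real.log (Fintype.card V / d)| ^ ((1 : ℝ) / r)
      ≤ (C * (indepNum H : ℝ) ^ r) ^ ((1 : ℝ) / r) := by
        gcongr
        exact abs_mul_log_le_mul_indepNum_pow hH hr hd hd1
    _ = C ^ ((1 : ℝ) / r) * indepNum H := by
        rw [Real.mul_rpow hC.le (by positivity), one_div,
          Real.pow_rpow_inv_natCast (Nat.cast_nonneg _) (by lia)]

/-- For every integer `r ≥ 2` there exists a constant `c > 0` such that
for all integers `n ≥ 2` and `d` with `1 ≤ d` and `d < n/(log n)^(3r²)`, every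
`(r+1)`-graph `H` on `n` vertices with maximum `r`-degree at most `d` satisfies
`α(H) ≥ c·((n/d)·log(n/d))^(1/r)`. -/
theorem stmt0 (r : ℕ) (hr : 2 ≤ r) :
    ∃ c : ℝ, 0 < c ∧
      ∀ (V : Type) [Fintype V] [DecidableEq V], ∀ (n d : ℕ) (H : Finset (Finset V)),
        Fintype.card V = n → 2 ≤ n → 1 ≤ d →
        (d : ℝ) < (n : ℝ) / (Real.log n) ^ (3 * r ^ 2) →
        (∀ e ∈ H, e.card = r + 1) →
        maxDegLe r H d →
        c * (((n : ℝ) / d) * Real.log ((n : ℝ) / d)) ^ ((1 : ℝ) / r) ≤ (indepNum H : ℝ) := by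
  obtain ⟨c, hc, h⟩ := stmt0_general r hr
  exact ⟨c, hc, fun V _ _ n d H hV hn hd _ hH hdeg ↦ (mul_le_mul_of_nonneg_left
    ((le_abs_self _).trans (Real.abs_rpow_le_abs_rpow _ _)) hc.le).trans
      (h V n d H hV (by lia) hd hH hdeg)⟩
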